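/- Let A be an M×N integer matrix all of whose entries are -1, 0, or 1, such that every row has at most p nonzero entries, and let b be a vector in ℝ^M. If the equation Ax = b has a solution over ℝ, then it has a solution x with ‖x‖_∞ ≤ min{M,N} · p^(min{M,N}−1) · ‖b‖_∞. -/

import Mathlib

/-!
Discard all but a maximal independent set of columns of `A`, and then all but a maximal independent
set of rows. What is left is an invertible integer matrix `D` of size `r = rank A`, and `D y = c`,
where `c` is a part of `b`, determines a solution `y` of the given system supported on the chosen
columns. By Cramer's rule `det D * y = adj D * c`. Expanding the product of the `ℓ¹` norms of the
rows of a matrix yields every term of its determinant, so the entries of `adj D` are at most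
`p ^ (r - 1)`, while `|det D| ≥ 1` because `det D` is a nonzero integer.
-/

open Matrix Module Submodule

section AbsoluteValue

variable {R S n : Type*} [CommRing R] [Nontrivial R] [CommRing S] [LinearOrder S]
  [IsStrictOrderedRing S] [Fintype n] [DecidableEq n] (abv : AbsoluteValue R S)

theorem abv_det_le_prod_sum (E : Matrix n n R) : abv E.det ≤ ∏ i, ∑ j, abv (E i j) :=
  calc
    abv E.det = abv (∑ σ : Equiv.Perm n, Equiv.Perm.sign σ • ∏ i, E i (σ i)) := by
      rw [← det_transpose, det_apply]; rfl
    _ ≤ ∑ σ : Equiv.Perm n, abv (Equiv.Perm.sign σ • ∏ i, E i (σ i)) := abv.sum_le _ _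
    _ = ∑ σ : Equiv.Perm n, ∏ i, abv (E i (σ i)) :=
      Finset.sum_congr rfl fun σ _ => by rw [abv.map_units_int_smul, abv.map_prod]
    _ = ∑ f ∈ Finset.univ.map ⟨fun σ : Equiv.Perm n => ⇑σ, DFunLike.coe_injective⟩,
          ∏ i, abv (E i (f i)) := by
      simp only [Finset.sum_map, Function.Embedding.coeFn_mk]
    _ ≤ ∑ f : n → n, ∏ i, abv (E i (f i)) :=
      Finset.sum_le_sum_of_subset_of_nonneg (Finset.subset_univ _) fun _ _ _ =>
        Finset.prod_nonneg fun _ _ => abv.nonneg _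
    _ = ∏ i, ∑ j, abv (E i j) := by rw [Finset.prod_univ_sum, Fintype.piFinset_univ]

variable {abv} {E : Matrix n n R} {p : S}

theorem abv_adjugate_le_pow (hE : ∀ i, ∑ j, abv (E i j) ≤ p) (i j : n) :
    abv (E.adjugate i j) ≤ p ^ (Fintype.card n - 1) := by
  have sum_row_self : ∑ l, abv (E.updateRow j (Pi.single i 1) j l) = 1 := by
    simp [Pi.single_apply, apply_ite abv]
  calc
    abv (E.adjugate i j) ≤ ∏ k, ∑ l, abv (E.updateRow j (Pi.single i 1) k l) := by
      rw [adjugate_apply]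
      exact abv_det_le_prod_sum abv _
    _ = ∏ k ∈ Finset.univ.erase j, ∑ l, abv (E.updateRow j (Pi.single i 1) k l) := by
      rw [← Finset.mul_prod_erase _ _ (Finset.mem_univ j), sum_row_self, one_mul]
    _ ≤ ∏ _k ∈ Finset.univ.erase j, p := by
      refine Finset.prod_le_prod (fun _ _ => Finset.sum_nonneg fun _ _ => abv.nonneg _) ?_
      intro k hk
      rw [updateRow_ne (Finset.ne_of_mem_erase hk)]
      exact hE k
    _ = p ^ (Fintype.card n - 1) := by simp

theorem abv_det_mul_abv_le_of_abv_mulVec_le (hE : ∀ i, ∑ j, abv (E i j) ≤ p) {y : n → R} {β : S}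
    (hy : ∀ i, abv ((E *ᵥ y) i) ≤ β) (k : n) :
    abv E.det * abv (y k) ≤ Fintype.card n * p ^ (Fintype.card n - 1) * β := by
  have adjugate_mulVec_mulVec : E.adjugate *ᵥ (E *ᵥ y) = E.det • y := by
    rw [mulVec_mulVec, adjugate_mul, smul_mulVec, one_mulVec]
  calc
    abv E.det * abv (y k) = abv (∑ i, E.adjugate k i * (E *ᵥ y) i) := by
      rw [← abv.map_mul]
      exact congrArg abv (congrFun adjugate_mulVec_mulVec k).symm
    _ ≤ ∑ i, abv (E.adjugate k i * (E *ᵥ y) i) := abv.sum_le _ _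
    _ ≤ ∑ _i : n, p ^ (Fintype.card n - 1) * β := by
      refine Finset.sum_le_sum fun i _ => ?_
      rw [abv.map_mul]
      have hadj := abv_adjugate_le_pow hE k i
      exact mul_le_mul hadj (hy i) (abv.nonneg _) ((abv.nonneg _).trans hadj)
    _ = Fintype.card n * p ^ (Fintype.card n - 1) * β := by simp [mul_assoc]

end AbsoluteValue

section Submatrix

variable {K m n κ ι V : Type*} [Field K]

theorem exists_fin_finrank_span_range_linearIndependent_comp [AddCommGroup V] [Module K V]
    [Finite ι] (v : ι → V) :
    ∃ f : Fin (finrank K (span K (Set.range v))) → ι,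
      span K (Set.range (v ∘ f)) = span K (Set.range v) ∧ LinearIndependent K (v ∘ f) := by
  have := FiniteDimensional.span_of_finite K (Set.finite_range v)
  obtain ⟨w, hmem, hspan, hli⟩ := exists_fun_fin_finrank_span_eq K (Set.range v)
  choose f hf using hmem
  obtain rfl : v ∘ f = w := funext hf
  exact ⟨f, hspan, hli⟩

theorem exists_linearIndependent_col_submatrix_rank [Fintype n] (B : Matrix m n K) :
    ∃ c : Fin B.rank → n, LinearIndependent K (B.submatrix id c).col ∧
      ∀ x, ∃ y, B.submatrix id c *ᵥ y = B *ᵥ x := by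
  rw [rank_eq_finrank_span_cols]
  obtain ⟨c, hspan, hli⟩ := exists_fin_finrank_span_range_linearIndependent_comp (K := K) B.col
  refine ⟨c, hli, fun x => ?_⟩
  have hmem : B *ᵥ x ∈ span K (Set.range B.col) := by
    rw [← range_mulVecLin]
    exact ⟨x, rfl⟩
  rw [← hspan] at hmem
  change B *ᵥ x ∈ span K (Set.range (B.submatrix id c).col) at hmem
  rwa [← range_mulVecLin] at hmem

theorem exists_isUnit_submatrix_of_linearIndependent_col [Finite m] [Fintype κ] [DecidableEq κ]
    {C : Matrix m κ K} (hC : LinearIndependent K C.col) :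
    ∃ r : κ → m, IsUnit (C.submatrix r id) := by
  have hrank : finrank K (span K (Set.range C.row)) = Fintype.card κ := by
    rw [← rank_eq_finrank_span_row, rank_eq_finrank_span_cols, finrank_span_eq_card hC]
  obtain ⟨r, -, hli⟩ := exists_fin_finrank_span_range_linearIndependent_comp (K := K) C.row
  let e : κ ≃ Fin _ := Fintype.equivFinOfCardEq hrank.symm
  exact ⟨r ∘ e, linearIndependent_rows_iff_isUnit.1 (hli.comp e e.injective)⟩

theorem mulVec_extend_zero {R : Type*} [NonUnitalNonAssocSemiring R] [Fintype n] [Fintype κ]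
    (B : Matrix m n R) {c : κ → n} (hc : c.Injective) (y : κ → R) :
    B *ᵥ Function.extend c y 0 = B.submatrix id c *ᵥ y := by
  ext i
  refine (Fintype.sum_of_injective c hc _ _ (fun j hj => ?_) fun k => ?_).symm
  · rw [Function.extend_apply' _ _ _ hj, Pi.zero_apply, mul_zero]
  · simp [hc.extend_apply]

end Submatrix

section IntegerMatrix

variable {K m n κ : Type*} [Field K] [LinearOrder K] [IsStrictOrderedRing K]
  [Fintype n] [Fintype κ] {p : ℕ} {b : m → K} {β : K}

theorem abs_le_card_mul_pow_of_isUnit_map_intCast [DecidableEq κ] {D : Matrix κ κ ℤ}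
    (hD : ∀ i, ∑ j, (D i j).natAbs ≤ p) (hunit : IsUnit (D.map (Int.cast : ℤ → K))) {y : κ → K}
    (hy : ∀ i, |(D.map (Int.cast : ℤ → K) *ᵥ y) i| ≤ β) (k : κ) :
    |y k| ≤ Fintype.card κ * (p : K) ^ (Fintype.card κ - 1) * β := by
  have one_le_abs_det : 1 ≤ |(D.map (Int.cast : ℤ → K)).det| := by
    have hdet := ((isUnit_iff_isUnit_det _).1 hunit).ne_zero
    rw [← Int.cast_det] at hdet ⊢
    exact_mod_cast Int.one_le_abs (Int.cast_ne_zero.1 hdet)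
  have hrows : ∀ i, ∑ j, AbsoluteValue.abs (D.map (Int.cast : ℤ → K) i j) ≤ (p : K) := by
    intro i
    simpa using Nat.cast_le (α := K).2 (hD i)
  exact (le_mul_of_one_le_left (abs_nonneg _) one_le_abs_det).trans
    (abv_det_mul_abv_le_of_abv_mulVec_le (abv := AbsoluteValue.abs) hrows hy k)

theorem sum_natAbs_submatrix_le {ι : Type*} {A : Matrix m n ℤ}
    (hA : ∀ i, ∑ j, (A i j).natAbs ≤ p) (r : ι → m) {c : κ → n} (hc : c.Injective) (i : ι) :
    ∑ j, (A.submatrix r c i j).natAbs ≤ p :=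
  calc
    ∑ j, (A.submatrix r c i j).natAbs = ∑ j ∈ Finset.univ.map ⟨c, hc⟩, (A (r i) j).natAbs := by
      simp
    _ ≤ ∑ j, (A (r i) j).natAbs := Finset.sum_le_sum_of_subset (Finset.subset_univ _)
    _ ≤ p := hA (r i)

theorem exists_mulVec_eq_abs_le_rank_mul_pow [Finite m] {A : Matrix m n ℤ}
    (hA : ∀ i, ∑ j, (A i j).natAbs ≤ p) (hsol : ∃ x, A.map (Int.cast : ℤ → K) *ᵥ x = b)
    (hβ : 0 ≤ β) (hb : ∀ i, |b i| ≤ β) :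
    ∃ x, A.map (Int.cast : ℤ → K) *ᵥ x = b ∧
      ∀ j, |x j| ≤ (A.map (Int.cast : ℤ → K)).rank *
        (p : K) ^ ((A.map (Int.cast : ℤ → K)).rank - 1) * β := by
  obtain ⟨x, rfl⟩ := hsol
  set B := A.map (Int.cast : ℤ → K)
  obtain ⟨c, hli, hcols⟩ := exists_linearIndependent_col_submatrix_rank B
  obtain ⟨y, hy⟩ := hcols x
  obtain ⟨r, hunit⟩ := exists_isUnit_submatrix_of_linearIndependent_col hli
  have hc : c.Injective := .of_comp (f := B.col) hli.injective
  have y_le (k) : |y k| ≤ B.rank * (p : K) ^ (B.rank - 1) * β := by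
    have hbound := abs_le_card_mul_pow_of_isUnit_map_intCast (sum_natAbs_submatrix_le hA r hc) hunit
      (y := y) (fun i => (congrArg abs (congrFun hy (r i))).trans_le (hb (r i))) k
    rwa [Fintype.card_fin] at hbound
  refine ⟨Function.extend c y 0, (mulVec_extend_zero B hc y).trans hy, fun j => ?_⟩
  by_cases hj : ∃ k, c k = j
  · obtain ⟨k, rfl⟩ := hj
    rw [hc.extend_apply]
    exact y_le k
  · rw [Function.extend_apply' _ _ _ hj, Pi.zero_apply, abs_zero]
    positivity

theorem mul_pow_pred_le_mul_pow_pred {r d : ℕ} (hrd : r ≤ d) (hp : p = 0 → r = 0) :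
    r * p ^ (r - 1) ≤ d * p ^ (d - 1) := by
  rcases p.eq_zero_or_pos with h0 | hpos
  · simp [hp h0]
  · gcongr

theorem bounded_solution_of_pm_one_matrix_general [Fintype m] {A : Matrix m n ℤ}
    (hA : ∀ i, ∑ j, (A i j).natAbs ≤ p) (hsol : ∃ x, A.map (Int.cast : ℤ → K) *ᵥ x = b)
    (hβ : 0 ≤ β) (hb : ∀ i, |b i| ≤ β) :
    ∃ x, A.map (Int.cast : ℤ → K) *ᵥ x = b ∧
      ∀ j, |x j| ≤ min (Fintype.card m : K) (Fintype.card n) *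
        (p : K) ^ (min (Fintype.card m) (Fintype.card n) - 1) * β := by
  obtain ⟨x, hx, hle⟩ := exists_mulVec_eq_abs_le_rank_mul_pow hA hsol hβ hb
  refine ⟨x, hx, fun j => (hle j).trans (mul_le_mul_of_nonneg_right ?_ hβ)⟩
  have rank_eq_zero (hp : p = 0) : (A.map (Int.cast : ℤ → K)).rank = 0 := by
    have hzero : A = 0 := by
      ext i j
      simpa [hp] using (Finset.single_le_sum_of_canonicallyOrdered (Finset.mem_univ j)).trans (hA i)
    simp [hzero]
  exact_mod_cast mul_pow_pred_le_mul_pow_pred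
    (le_min (rank_le_card_height _) (rank_le_card_width _)) rank_eq_zero

end IntegerMatrix

theorem sum_natAbs_eq_card_filter_ne_zero {ι : Type*} (s : Finset ι) {a : ι → ℤ}
    (ha : ∀ j ∈ s, a j = -1 ∨ a j = 0 ∨ a j = 1) :
    ∑ j ∈ s, (a j).natAbs = (s.filter fun j => a j ≠ 0).card := by
  rw [Finset.card_filter]
  refine Finset.sum_congr rfl fun j hj => ?_
  rcases ha j hj with h | h | h <;> simp [h]

/-- **Bounded solutions of integer linear systems.**
If `A` is an `M × N` integer matrix all of whose entries lie in `{-1, 0, 1}`,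
with at most `p` nonzero entries in every row, and `b : ℝ^M` is such that
`A x = b` has a real solution, then it has a solution with
`‖x‖_∞ ≤ min{M,N} · p^(min{M,N} - 1) · ‖b‖_∞`.
(The norms on `Fin N → ℝ` and `Fin M → ℝ` are the sup norms.) -/
theorem bounded_solution_of_pm_one_matrix
    (M N p : ℕ) (A : Matrix (Fin M) (Fin N) ℤ)
    (hentries : ∀ i j, A i j = -1 ∨ A i j = 0 ∨ A i j = 1)
    (hrows : ∀ i, (Finset.univ.filter fun j => A i j ≠ 0).card ≤ p)
    (b : Fin M → ℝ)
    (hsol : ∃ x : Fin N → ℝ, (A.map (Int.cast : ℤ → ℝ)).mulVec x = b) :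
    ∃ x : Fin N → ℝ, (A.map (Int.cast : ℤ → ℝ)).mulVec x = b ∧
      ‖x‖ ≤ (min M N : ℝ) * (p : ℝ) ^ (min M N - 1) * ‖b‖ := by
  obtain ⟨x, hx, hle⟩ := bounded_solution_of_pm_one_matrix_general
    (fun i => (sum_natAbs_eq_card_filter_ne_zero _ fun j _ => hentries i j).trans_le (hrows i))
    hsol (norm_nonneg b) (norm_le_pi_norm b)
  exact ⟨x, hx, (pi_norm_le_iff_of_nonneg (by positivity)).2 (by simpa using hle)⟩
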